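/- B₂ cancellation lemma (the lemma in Section 6 of the paper, for X_{III}): the composite 𝒦_{(0,−1),2} ∘ 𝒦_{(1,0),1} ∘ 𝒦_{(1,1),2} ∘ 𝒦_{(1,2),1} ∘ 𝒦_{(0,1),2} ∘ 𝒦_{(−1,0),1} of the six wall-crossing automorphisms of K = ℂ(x,y) (with wall function (1+z^{γ_i}) for i odd and (1+z^{γ_i})² for i even, where γ₁ = (−1,0), γ₂ = (0,1), γ₃ = (1,2), γ₄ = (1,1), γ₅ = (1,0), γ₆ = (0,−1)) sends x ↦ xy² and y ↦ x^{−1}y^{−1}; equivalently it sends z^μ ↦ z^{M^{−1}μ} for every μ ∈ ℤ², where M : ℤ² → ℤ² is the monodromy with M(1,0) = (−1,−2) and M(0,1) = (1,1). -/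

import Mathlib

open MvPolynomial

noncomputable section

/-- `K = ℂ(x,y)`, the field of rational functions in two variables over `ℂ`. -/
abbrev K : Type := FractionRing (MvPolynomial (Fin 2) ℂ)

/-- The rational function `x`. -/
noncomputable def xx : K := algebraMap (MvPolynomial (Fin 2) ℂ) K (X 0)

/-- The rational function `y`. -/
noncomputable def yy : K := algebraMap (MvPolynomial (Fin 2) ℂ) K (X 1)

/-- `z^μ = x^m y^n` for `μ = (m,n) ∈ ℤ²`. -/
noncomputable def zmon (μ : ℤ × ℤ) : K := xx ^ μ.1 * yy ^ μ.2

/-- `⟨μ,γ⟩ = m b − n a` for `μ = (m,n)`, `γ = (a,b)`. -/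
def pairing (μ γ : ℤ × ℤ) : ℤ := μ.1 * γ.2 - μ.2 * γ.1

/-- `Φ` is the wall-crossing transformation `𝒦_{γ,d}`: the `ℂ`-algebra automorphism of `K`
satisfying `𝒦_{γ,d}(z^μ) = z^μ (1+z^γ)^{d⟨μ,γ⟩}` for all `μ ∈ ℤ²`. -/
def IsWallCrossing (d : ℤ) (γ : ℤ × ℤ) (Φ : K ≃ₐ[ℂ] K) : Prop :=
  ∀ μ : ℤ × ℤ, Φ (zmon μ) = zmon μ * (1 + zmon γ) ^ (d * pairing μ γ)

/-- A polynomial expression in `x, y` is nonzero in `K` as soon as its value at `(1,1)` is. -/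
theorem ne_of_eval (p : MvPolynomial (Fin 2) ℂ) (h : eval (fun _ => (1 : ℂ)) p ≠ 0) :
    algebraMap (MvPolynomial (Fin 2) ℂ) K p ≠ 0 := by
  intro h0
  have : p = 0 := (IsFractionRing.injective (MvPolynomial (Fin 2) ℂ) K) (by rw [h0, map_zero])
  exact h (by rw [this, map_zero])

theorem xx_ne : xx ≠ 0 := ne_of_eval (X 0) (by simp)

theorem yy_ne : yy ≠ 0 := ne_of_eval (X 1) (by simp)

theorem ne1 : 1 + xx ≠ 0 := by
  have := ne_of_eval (1 + X 0) (by norm_num)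
  simpa [xx] using this

theorem ne2 : 1 + yy ≠ 0 := by
  have := ne_of_eval (1 + X 1) (by norm_num)
  simpa [yy] using this

theorem ne3 : 1 + xx * yy ≠ 0 := by
  have := ne_of_eval (1 + X 0 * X 1) (by norm_num)
  simpa [xx, yy] using this

theorem ne4 : 1 + xx * yy ^ 2 ≠ 0 := by
  have := ne_of_eval (1 + X 0 * X 1 ^ 2) (by norm_num)
  simpa [xx, yy] using this

theorem ne5 : 1 + yy + xx * yy ^ 2 ≠ 0 := by
  have := ne_of_eval (1 + X 1 + X 0 * X 1 ^ 2) (by norm_num)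
  simpa [xx, yy] using this

theorem ne6 : 1 + xx * yy + yy ≠ 0 := by
  have := ne_of_eval (1 + X 0 * X 1 + X 1) (by norm_num)
  simpa [xx, yy] using this

theorem zmon_x : zmon (1, 0) = xx := by simp [zmon]

theorem zmon_y : zmon (0, 1) = yy := by simp [zmon]

theorem wall_x {d : ℤ} {γ : ℤ × ℤ} {Φ : K ≃ₐ[ℂ] K} (h : IsWallCrossing d γ Φ) :
    Φ xx = xx * (1 + xx ^ γ.1 * yy ^ γ.2) ^ (d * γ.2) := by
  have := h (1, 0)
  rw [zmon_x] at this
  simpa [pairing, zmon] using this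

theorem wall_y {d : ℤ} {γ : ℤ × ℤ} {Φ : K ≃ₐ[ℂ] K} (h : IsWallCrossing d γ Φ) :
    Φ yy = yy * (1 + xx ^ γ.1 * yy ^ γ.2) ^ (-(d * γ.1)) := by
  have := h (0, 1)
  rw [zmon_y] at this
  simpa [pairing, zmon] using this

/-- B₂ cancellation lemma: the composite
`𝒦_{(0,−1),2} ∘ 𝒦_{(1,0),1} ∘ 𝒦_{(1,1),2} ∘ 𝒦_{(1,2),1} ∘ 𝒦_{(0,1),2} ∘ 𝒦_{(−1,0),1}`
sends `z^μ ↦ z^{M⁻¹μ}` for every `μ ∈ ℤ²`, where `M(1,0) = (−1,−2)`, `M(0,1) = (1,1)`,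
so `M⁻¹(m,n) = (m−n, 2m−n)`; in particular `x ↦ xy²` and `y ↦ x⁻¹y⁻¹`. -/
theorem B2_cancellation
    (K1 K2 K3 K4 K5 K6 : K ≃ₐ[ℂ] K)
    (h1 : IsWallCrossing 1 (-1, 0) K1) (h2 : IsWallCrossing 2 (0, 1) K2)
    (h3 : IsWallCrossing 1 (1, 2) K3) (h4 : IsWallCrossing 2 (1, 1) K4)
    (h5 : IsWallCrossing 1 (1, 0) K5) (h6 : IsWallCrossing 2 (0, -1) K6) :
    ∀ μ : ℤ × ℤ, K6 (K5 (K4 (K3 (K2 (K1 (zmon μ)))))) =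
      zmon (μ.1 - μ.2, 2 * μ.1 - μ.2) := by
  have x0 := xx_ne
  have y0 := yy_ne
  have n1 := ne1
  have n2 := ne2
  have n3 := ne3
  have n4 := ne4
  have n5 := ne5
  have n6 := ne6
  have m3 : 1 + yy * xx ≠ 0 := by rw [mul_comm]; exact n3
  have m4 : 1 + yy ^ 2 * xx ≠ 0 := by rw [mul_comm]; exact n4
  have m5 : 1 + yy + yy ^ 2 * xx ≠ 0 := by rw [mul_comm]; exact n5
  have m6 : 1 + yy * xx + yy ≠ 0 := by rw [mul_comm]; exact n6
  have a1 : K1 xx = xx := by simpa using wall_x h1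
  have b1 : K1 yy = yy * (1 + xx) / xx := by
    have h : K1 yy = yy * (1 + xx⁻¹) := by simpa using wall_y h1
    rw [h]; field_simp; ring
  have a2 : K2 xx = xx * (1 + yy) ^ 2 := by
    have h := wall_x h2
    norm_num at h
    exact_mod_cast h
  have b2 : K2 yy = yy := by simpa using wall_y h2
  have a3 : K3 xx = xx * (1 + xx * yy ^ 2) ^ 2 := by
    have h := wall_x h3
    norm_num at h
    exact_mod_cast h
  have b3 : K3 yy = yy / (1 + xx * yy ^ 2) := by
    have h := wall_y h3
    norm_num at h
    rw [div_eq_mul_inv]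
    exact_mod_cast h
  have a4 : K4 xx = xx * (1 + xx * yy) ^ 2 := by
    have h := wall_x h4
    norm_num at h
    exact_mod_cast h
  have b4 : K4 yy = yy / (1 + xx * yy) ^ 2 := by
    have h : K4 yy = yy * (1 + xx * yy) ^ (-2 : ℤ) := by simpa using wall_y h4
    rw [h, div_eq_mul_inv, zpow_neg]; norm_cast
  have a5 : K5 xx = xx := by simpa using wall_x h5
  have b5 : K5 yy = yy / (1 + xx) := by
    have h := wall_y h5
    norm_num at h
    rw [h, div_eq_mul_inv]
  have a6 : K6 xx = xx * yy ^ 2 / (1 + yy) ^ 2 := by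
    have h : K6 xx = xx * (1 + yy⁻¹) ^ (-2 : ℤ) := by simpa using wall_x h6
    have e : 1 + yy⁻¹ = (1 + yy) / yy := by field_simp; ring
    rw [h, e, zpow_neg, ← inv_zpow, inv_div]
    norm_cast
    rw [div_pow]; ring
  have b6 : K6 yy = yy := by simpa using wall_y h6
  -- the image of x
  have hx : K6 (K5 (K4 (K3 (K2 (K1 xx))))) = xx * yy ^ 2 := by
    have s3 : K3 (K2 (K1 xx)) = xx * (1 + yy + xx * yy ^ 2) ^ 2 := by
      simp only [a1, a2, map_mul, map_pow, map_add, map_one, a3, b3]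
      field_simp; ring
    have s4 : K4 (K3 (K2 (K1 xx))) = xx * (1 + xx * yy + yy) ^ 2 := by
      rw [s3]
      simp only [map_mul, map_pow, map_add, map_one, a4, b4]
      field_simp; ring
    have s5 : K5 (K4 (K3 (K2 (K1 xx)))) = xx * (1 + yy) ^ 2 := by
      rw [s4]
      simp only [map_mul, map_pow, map_add, map_one, a5, b5]
      field_simp; ring
    rw [s5]
    simp only [map_mul, map_pow, map_add, map_one, a6, b6]
    field_simp
  -- the image of y
  have hy : K6 (K5 (K4 (K3 (K2 (K1 yy))))) = (xx * yy)⁻¹ := by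
    have s2 : K2 (K1 yy) = yy * (1 + xx * (1 + yy) ^ 2) / (xx * (1 + yy) ^ 2) := by
      rw [b1]
      simp only [map_mul, map_div₀, map_add, map_one, a2, b2]
    have s3 : K3 (K2 (K1 yy)) =
        yy * ((1 + xx * yy) ^ 2 + xx) / (xx * (1 + yy + xx * yy ^ 2) ^ 2) := by
      have e : 1 + yy / (1 + xx * yy ^ 2) = (1 + yy + xx * yy ^ 2) / (1 + xx * yy ^ 2) := by
        field_simp; ring
      rw [s2]
      simp only [map_mul, map_div₀, map_pow, map_add, map_one, a3, b3]
      rw [e]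
      field_simp; ring
    have s4 : K4 (K3 (K2 (K1 yy))) = yy * (1 + xx) / (xx * (1 + xx * yy + yy) ^ 2) := by
      have e : 1 + yy / (1 + xx * yy) ^ 2 +
          xx * (1 + xx * yy) ^ 2 * (yy / (1 + xx * yy) ^ 2) ^ 2 =
          (1 + xx * yy + yy) / (1 + xx * yy) := by
        field_simp; ring
      rw [s3]
      simp only [map_mul, map_div₀, map_pow, map_add, map_one, a4, b4]
      rw [e]
      field_simp
    have s5 : K5 (K4 (K3 (K2 (K1 yy)))) = yy / (xx * (1 + yy) ^ 2) := by
      have e : 1 + xx * (yy / (1 + xx)) + yy / (1 + xx) = 1 + yy := by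
        field_simp; ring
      rw [s4]
      simp only [map_mul, map_div₀, map_pow, map_add, map_one, a5, b5]
      rw [e]
      field_simp
    rw [s5]
    simp only [map_mul, map_div₀, map_pow, map_add, map_one, a6, b6]
    field_simp
  rintro ⟨m, n⟩
  simp only [zmon, map_mul, map_zpow₀, hx, hy]
  rw [inv_zpow, ← zpow_neg, mul_zpow, mul_zpow, ← zpow_natCast, ← zpow_mul,
    sub_eq_add_neg, sub_eq_add_neg, zpow_add₀ x0, zpow_add₀ y0]
  push_cast
  ring

end
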